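/- Fix d ≥ 3, positive reals r, s, and a real b with 0 < b ≤ d − 2. For every λ ∈ (0,∞)^d, the Kullback–Leibler risk of the empirical Bayes predictive distribution is strictly smaller than that of the Jeffreys predictive distribution: R(λ, p̂) < R(λ, p_J), where R(λ, q) = Σ_{x∈ℕ^d} p_r(x|λ) Σ_{y∈ℕ^d} p_s(y|λ) log(p_s(y|λ)/q(y;x)). -/

import Mathlib

/-- Joint pmf of `d` independent Poisson variables with means `c * lam i`. -/
noncomputable def poissonPMF (d : ℕ) (c : ℝ) (lam : Fin d → ℝ) (x : Fin d → ℕ) : ℝ :=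
  ∏ i, Real.exp (-(c * lam i)) * (c * lam i) ^ (x i) / (Nat.factorial (x i) : ℝ)

/-- Bayesian predictive distribution based on the Jeffreys prior. -/
noncomputable def pJ (d : ℕ) (r s : ℝ) (x y : Fin d → ℕ) : ℝ :=
  (r / (r + s)) ^ ((∑ i, (x i : ℝ)) + (d : ℝ) / 2) * (s / (r + s)) ^ (∑ i, y i)
    * ∏ i, Real.Gamma ((x i : ℝ) + (y i : ℝ) + 1 / 2)
        / (Real.Gamma ((x i : ℝ) + 1 / 2) * (Nat.factorial (y i) : ℝ))

/-- Kullback–Leibler risk of a predictive distribution `q` (with `q x y = q(y; x)`). -/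
noncomputable def klRisk (d : ℕ) (r s : ℝ) (lam : Fin d → ℝ)
    (q : (Fin d → ℕ) → (Fin d → ℕ) → ℝ) : ℝ :=
  ∑' x : Fin d → ℕ, poissonPMF d r lam x *
    ∑' y : Fin d → ℕ, poissonPMF d s lam y * Real.log (poissonPMF d s lam y / q x y)

/-- Empirical Bayes predictive distribution with parameter `b`,
where `α(x) = r * b / (∑ i, x i + 1)`. -/
noncomputable def pHat (d : ℕ) (r s b : ℝ) (x y : Fin d → ℕ) : ℝ :=
  ((r + r * b / ((∑ i, (x i : ℝ)) + 1)) / (r + s + r * b / ((∑ i, (x i : ℝ)) + 1)))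
      ^ ((∑ i, (x i : ℝ)) + (d : ℝ) / 2)
    * (s / (r + s + r * b / ((∑ i, (x i : ℝ)) + 1))) ^ (∑ i, y i)
    * ∏ i, Real.Gamma ((x i : ℝ) + (y i : ℝ) + 1 / 2)
        / (Real.Gamma ((x i : ℝ) + 1 / 2) * (Nat.factorial (y i) : ℝ))

/-!
Both rules are posterior predictive pmfs for priors `∏ i, (lam i) ^ (-1 / 2) * exp (-α * lam i)`:
Jeffreys has `α = 0`, empirical Bayes has `α` depending on the total count `N` of `x`. The logarithm
of their ratio is therefore affine in the total count of `y`, with coefficients depending on `N`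
only, so averaging over `y` leaves a function of `N` and `∑ i, s * lam i`. The Poisson Stein
identity `E[(∑ i, r * lam i) * g (N + 1)] = E[N * g N]` removes the parameter and exhibits the risk
difference as the expectation of a function of `N` alone. That function is positive at every
`N = n`: bound one logarithm above by `log (1 + v) ≤ v * (2 + v) / (2 * (1 + v))` and the difference
of the two others below by `2 * (y - x) / (y + x) ≤ log y - log x`, and compare rational functions,
which is where `b ≤ d - 2` enters.
-/

section LogInequalities

open Real

theorem log_one_add_le_of_nonneg {v : ℝ} (hv : 0 ≤ v) :
    log (1 + v) ≤ v * (2 + v) / (2 * (1 + v)) :=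
  calc log (1 + v) ≤ sinh (log (1 + v)) := self_le_sinh_iff.2 (log_nonneg (by linarith))
    _ = v * (2 + v) / (2 * (1 + v)) := by
      rw [sinh_log (by positivity)]
      field_simp
      ring

theorem abs_log_one_add_le {v : ℝ} (hv : 0 ≤ v) : |log (1 + v)| ≤ v := by
  rw [abs_of_nonneg (log_nonneg (by linarith))]
  linarith [log_le_sub_one_of_pos (show 0 < 1 + v by linarith)]

theorem mul_log_one_add_div_le {n β : ℝ} (hn : 0 ≤ n) (hβ : 0 < β) :
    n * log (1 + β / n) ≤ β / 2 * (1 + n / (n + β)) := by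
  rcases hn.eq_or_lt with rfl | hn
  · simp only [zero_mul, zero_div, add_zero, mul_one]
    positivity
  · calc n * log (1 + β / n) ≤ n * (β / n * (2 + β / n) / (2 * (1 + β / n))) := by
          gcongr
          exact log_one_add_le_of_nonneg (by positivity)
      _ = β / 2 * (1 + n / (n + β)) := by
          field_simp
          ring

theorem two_mul_sub_div_add_le_log_sub_log {x y : ℝ} (hx : 0 < x) (hxy : x ≤ y) :
    2 * (y - x) / (y + x) ≤ log y - log x := by
  have hy : 0 < y := hx.trans_le hxy
  have h := le_log_one_add_of_nonneg (div_nonneg (sub_nonneg.2 hxy) hx.le)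
  rw [show 1 + (y - x) / x = y / x by field_simp; ring, log_div hy.ne' hx.ne'] at h
  refine le_of_eq_of_le ?_ h
  rw [show (y - x) / x + 2 = (y + x) / x by field_simp; ring]
  field_simp

theorem sub_div_mul_one_add_div_lt {n β b : ℝ} (hn : 0 ≤ n) (hβ : 0 < β) (hβb : β < b) :
    (b - β) / β * (β / 2 * (1 + n / (n + β)))
      < (n + 1 + b / 2) * (2 * (b - β) / (2 * (n + 1) + b + β)) := by
  have hb : 0 < b := hβ.trans hβb
  have hsub : 0 < b - β := sub_pos.2 hβb
  have hfrac : n / (n + β) < (n + 1) / (n + 1 + β) := by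
    rw [div_lt_div_iff₀ (by positivity) (by positivity)]
    linarith
  calc (b - β) / β * (β / 2 * (1 + n / (n + β)))
      < (b - β) / β * (β / 2 * (1 + (n + 1) / (n + 1 + β))) := by gcongr
    _ = (b - β) * ((2 * (n + 1) + β) / (2 * (n + 1 + β))) := by
        field_simp
        ring
    _ ≤ (b - β) * ((2 * (n + 1) + b) / (2 * (n + 1) + b + β)) := by
        refine mul_le_mul_of_nonneg_left ?_ hsub.le
        rw [div_le_div_iff₀ (by positivity) (by positivity)]
        nlinarith
    _ = (n + 1 + b / 2) * (2 * (b - β) / (2 * (n + 1) + b + β)) := by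
        field_simp

theorem sub_div_mul_log_lt_mul_log_sub_log {n β b D : ℝ} (hn : 0 ≤ n) (hβ : 0 < β) (hβb : β < b)
    (hD : n + 1 + b / 2 ≤ D) :
    (b - β) / β * (n * log (1 + β / n))
      < D * (log (1 + b / (n + 1)) - log (1 + β / (n + 1))) := by
  have hb : 0 < b := hβ.trans hβb
  have hsub : 0 < b - β := sub_pos.2 hβb
  have hlog : 2 * (b - β) / (2 * (n + 1) + b + β)
      ≤ log (1 + b / (n + 1)) - log (1 + β / (n + 1)) := by
    refine le_of_eq_of_le ?_ (two_mul_sub_div_add_le_log_sub_log (by positivity)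
      (by gcongr : 1 + β / (n + 1) ≤ 1 + b / (n + 1)))
    field_simp
    ring
  calc (b - β) / β * (n * log (1 + β / n))
      ≤ (b - β) / β * (β / 2 * (1 + n / (n + β))) :=
        mul_le_mul_of_nonneg_left (mul_log_one_add_div_le hn hβ) (div_pos hsub hβ).le
    _ < (n + 1 + b / 2) * (2 * (b - β) / (2 * (n + 1) + b + β)) :=
        sub_div_mul_one_add_div_lt hn hβ hβb
    _ ≤ D * (2 * (b - β) / (2 * (n + 1) + b + β)) :=
        mul_le_mul_of_nonneg_right hD (by positivity)
    _ ≤ D * (log (1 + b / (n + 1)) - log (1 + β / (n + 1))) :=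
        mul_le_mul_of_nonneg_left hlog ((by positivity : 0 ≤ n + 1 + b / 2).trans hD)

theorem abs_log_Gamma_add_natCast_sub_le {z : ℝ} (hz : 1 / 2 ≤ z) (k : ℕ) :
    |log (Gamma (z + k)) - log (Gamma z)| ≤ k * (z + k) := by
  induction k with
  | zero => simp
  | succ k ih =>
    have hpos : 0 < z + k := by positivity
    have hlog : |log (z + k)| ≤ z + k + 1 := by
      have hinv : (z + k)⁻¹ ≤ 2 := by
        rw [inv_le_comm₀ hpos two_pos]
        linarith [k.cast_nonneg (α := ℝ)]
      rw [abs_le]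
      constructor <;> linarith [log_le_sub_one_of_pos hpos, one_sub_inv_le_log_of_pos hpos]
    calc |log (Gamma (z + (k + 1 : ℕ))) - log (Gamma z)|
        = |log (z + k) + (log (Gamma (z + k)) - log (Gamma z))| := by
          rw [Nat.cast_succ, ← add_assoc, Gamma_add_one hpos.ne',
            log_mul hpos.ne' (Gamma_pos_of_pos hpos).ne', add_sub_assoc]
      _ ≤ (z + k + 1) + k * (z + k) := (abs_add_le _ _).trans (add_le_add hlog ih)
      _ ≤ (k + 1 : ℕ) * (z + (k + 1 : ℕ)) := by
          push_cast
          nlinarith [k.cast_nonneg (α := ℝ)]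

end LogInequalities

section PiSums

variable {𝕜 : Type*} [RCLike 𝕜]

theorem hasSum_prod_mul_prod {α β : Type*} {f : α → 𝕜} {g : β → 𝕜} {a b : 𝕜}
    (hf : HasSum f a) (hg : HasSum g b) : HasSum (fun p : α × β => f p.1 * g p.2) (a * b) :=
  hf.mul hg (summable_mul_of_summable_norm hf.summable.norm hg.summable.norm)

theorem hasSum_fin_pi_prod {n : ℕ} {κ : Fin n → Type*} {f : ∀ i, κ i → 𝕜} {a : Fin n → 𝕜}
    (hf : ∀ i, HasSum (f i) (a i)) : HasSum (fun x : ∀ i, κ i => ∏ i, f i (x i)) (∏ i, a i) := by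
  induction n with
  | zero => simp
  | succ n ih =>
    rw [← (Fin.consEquiv κ).hasSum_iff, Fin.prod_univ_succ]
    simpa [Function.comp_def, Fin.prod_univ_succ, Fin.consEquiv] using
      hasSum_prod_mul_prod (hf 0) (ih fun i => hf i.succ)

theorem hasSum_pi_prod {ι : Type*} [Fintype ι] {κ : ι → Type*} {f : ∀ i, κ i → 𝕜} {a : ι → 𝕜}
    (hf : ∀ i, HasSum (f i) (a i)) : HasSum (fun x : ∀ i, κ i => ∏ i, f i (x i)) (∏ i, a i) := by
  let e := (Fintype.equivFin ι).symm
  rw [← e.prod_comp, ← (Equiv.piCongrLeft κ e).hasSum_iff]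
  simpa only [Function.comp_def, ← e.prod_comp, Equiv.piCongrLeft_apply_apply] using
    hasSum_fin_pi_prod fun i => hf (e i)

end PiSums

section PoissonPMF

open Real

variable {d : ℕ} {c : ℝ} {lam : Fin d → ℝ}

theorem poissonPMF_pos (hc : 0 < c) (hlam : ∀ i, 0 < lam i) (x : Fin d → ℕ) :
    0 < poissonPMF d c lam x :=
  Finset.prod_pos fun i _ => by have := hlam i; positivity

theorem hasSum_poissonPMF_mul_prod_pow (c : ℝ) (lam z : Fin d → ℝ) :
    HasSum (fun x => poissonPMF d c lam x * ∏ i, z i ^ x i)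
      (∏ i, exp (-(c * lam i)) * exp (c * lam i * z i)) := by
  convert! hasSum_pi_prod fun i => (exp_eq_exp_ℝ ▸
    NormedSpace.expSeries_div_hasSum_exp (c * lam i * z i)).mul_left (exp (-(c * lam i))) using 2
    with x
  rw [poissonPMF, ← Finset.prod_mul_distrib]
  refine Finset.prod_congr rfl fun i _ => ?_
  rw [mul_pow]
  ring

theorem hasSum_poissonPMF (c : ℝ) (lam : Fin d → ℝ) : HasSum (poissonPMF d c lam) 1 := by
  simpa [← exp_add] using hasSum_poissonPMF_mul_prod_pow c lam 1

theorem summable_poissonPMF_mul_exp_sum (c : ℝ) (lam : Fin d → ℝ) :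
    Summable fun x => poissonPMF d c lam x * exp (∑ i, (x i : ℝ)) := by
  simpa [exp_sum, ← exp_nat_mul] using
    (hasSum_poissonPMF_mul_prod_pow c lam fun _ => exp 1).summable

theorem poissonPMF_add_single (x : Fin d → ℕ) (i : Fin d) :
    poissonPMF d c lam (x + Pi.single i 1) * (x i + 1) = c * lam i * poissonPMF d c lam x := by
  have hx : (x i + 1 : ℝ) = ∏ j, if i = j then (x j + 1 : ℝ) else 1 := by simp
  have hc : c * lam i = ∏ j, if i = j then c * lam j else 1 := by simp
  rw [hx, hc, poissonPMF, poissonPMF, ← Finset.prod_mul_distrib, ← Finset.prod_mul_distrib]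
  refine Finset.prod_congr rfl fun j _ => ?_
  rcases eq_or_ne i j with rfl | hij
  · simp only [Pi.add_apply, Pi.single_eq_same, Nat.factorial_succ, if_true]
    push_cast
    field_simp
    ring
  · simp [hij, hij.symm]

theorem hasSum_poissonPMF_mul_apply_mul {g : (Fin d → ℕ) → ℝ} {v : ℝ} (i : Fin d)
    (hg : HasSum (fun x => poissonPMF d c lam x * g (x + Pi.single i 1)) v) :
    HasSum (fun x => poissonPMF d c lam x * (x i * g x)) (c * lam i * v) := by
  have hinj : Function.Injective fun x : Fin d → ℕ => x + Pi.single i 1 := add_left_injective _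
  rw [← hinj.hasSum_iff]
  · convert! hg.mul_left (c * lam i) using 2 with x
    simp only [Function.comp_apply, Pi.add_apply, Pi.single_eq_same, Nat.cast_add, Nat.cast_one]
    rw [← mul_assoc, poissonPMF_add_single, mul_assoc]
  · intro x hx
    have hxi : x i = 0 := by
      contrapose! hx
      refine ⟨x - Pi.single i 1, tsub_add_cancel_of_le fun j => ?_⟩
      rcases eq_or_ne j i with rfl | hj
      · simpa [Nat.one_le_iff_ne_zero] using hx
      · simp [hj]
    simp [hxi]

theorem hasSum_poissonPMF_mul_sum_mul {g : ℝ → ℝ} {v : ℝ}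
    (hg : HasSum (fun x => poissonPMF d c lam x * g (∑ i, (x i : ℝ) + 1)) v) :
    HasSum (fun x => poissonPMF d c lam x * ((∑ i, (x i : ℝ)) * g (∑ i, (x i : ℝ))))
      ((∑ i, c * lam i) * v) := by
  have hcoord (i : Fin d) : HasSum (fun x => poissonPMF d c lam x * (x i * g (∑ j, (x j : ℝ))))
      (c * lam i * v) := by
    refine hasSum_poissonPMF_mul_apply_mul (g := fun x => g (∑ j, (x j : ℝ))) i ?_
    convert! hg using 4 with x
    simp [Finset.sum_add_distrib, Pi.single_apply]
  simpa only [Finset.mul_sum, Finset.sum_mul] using hasSum_sum fun i _ => hcoord i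

theorem hasSum_poissonPMF_mul_sum (c : ℝ) (lam : Fin d → ℝ) :
    HasSum (fun x => poissonPMF d c lam x * ∑ i, (x i : ℝ)) (∑ i, c * lam i) := by
  simpa only [mul_one] using hasSum_poissonPMF_mul_sum_mul (g := fun _ => 1) (v := 1)
    (by simpa only [mul_one] using hasSum_poissonPMF c lam)

end PoissonPMF

section Growth

open Real Asymptotics Filter

variable {d : ℕ} {r s : ℝ} {lam : Fin d → ℝ} {F : (Fin d → ℕ) × (Fin d → ℕ) → ℝ}

/-- The exponential of the total count, the growth scale against which integrands are compared:
it is summable against every Poisson pmf and dominates all polynomials in the counts. -/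
noncomputable def expTotal (x : Fin d → ℕ) : ℝ :=
  exp (∑ i, (x i : ℝ))

theorem pow_sum_isBigO_expTotal (k : ℕ) :
    (fun x : Fin d → ℕ => (∑ i, (x i : ℝ)) ^ k) =O[⊤] (expTotal : (Fin d → ℕ) → ℝ) :=
  .of_bound k.factorial <| .of_forall fun x => by
    rw [expTotal, norm_of_nonneg (by positivity), norm_of_nonneg (exp_pos _).le]
    exact (div_le_iff₀' (by positivity)).1 (pow_div_factorial_le_exp _ (by positivity) k)

theorem pow_apply_isBigO_expTotal (i : Fin d) (k : ℕ) :
    (fun x : Fin d → ℕ => (x i : ℝ) ^ k) =O[⊤] (expTotal : (Fin d → ℕ) → ℝ) := by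
  refine .trans (.of_bound' <| .of_forall fun x => ?_) (pow_sum_isBigO_expTotal k)
  rw [norm_of_nonneg (by positivity), norm_of_nonneg (by positivity)]
  gcongr
  exact Finset.single_le_sum (f := fun j => (x j : ℝ)) (fun _ _ => by positivity)
    (Finset.mem_univ i)

theorem one_isBigO_expTotal : (1 : (Fin d → ℕ) → ℝ) =O[⊤] expTotal :=
  (pow_sum_isBigO_expTotal 0).congr_left fun _ => pow_zero _

theorem sum_isBigO_expTotal :
    (fun x : Fin d → ℕ => ∑ i, (x i : ℝ)) =O[⊤] (expTotal : (Fin d → ℕ) → ℝ) := by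
  simpa only [pow_one] using pow_sum_isBigO_expTotal 1

theorem mul_isBigO_expTotal_mul_expTotal {f g : (Fin d → ℕ) → ℝ} (hf : f =O[⊤] expTotal)
    (hg : g =O[⊤] expTotal) :
    (fun z : (Fin d → ℕ) × (Fin d → ℕ) => f z.1 * g z.2)
      =O[⊤] fun z => expTotal z.1 * expTotal z.2 :=
  (hf.comp_tendsto (tendsto_top (f := Prod.fst))).mul
    (hg.comp_tendsto (tendsto_top (f := Prod.snd)))

theorem fst_isBigO_expTotal_mul_expTotal {f : (Fin d → ℕ) → ℝ} (hf : f =O[⊤] expTotal) :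
    (fun z : (Fin d → ℕ) × (Fin d → ℕ) => f z.1)
      =O[⊤] fun z => expTotal z.1 * expTotal z.2 := by
  simpa only [Pi.one_apply, mul_one] using mul_isBigO_expTotal_mul_expTotal hf one_isBigO_expTotal

theorem snd_isBigO_expTotal_mul_expTotal {f : (Fin d → ℕ) → ℝ} (hf : f =O[⊤] expTotal) :
    (fun z : (Fin d → ℕ) × (Fin d → ℕ) => f z.2)
      =O[⊤] fun z => expTotal z.1 * expTotal z.2 := by
  simpa only [Pi.one_apply, one_mul] using mul_isBigO_expTotal_mul_expTotal one_isBigO_expTotal hf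

theorem summable_poissonPMF_mul {f : (Fin d → ℕ) → ℝ} (hf : f =O[cofinite] expTotal) (c : ℝ)
    (lam : Fin d → ℝ) : Summable fun x => poissonPMF d c lam x * f x :=
  summable_of_isBigO (summable_poissonPMF_mul_exp_sum c lam) ((isBigO_refl _ _).mul hf)

theorem summable_poissonPMF_mul_poissonPMF_mul
    (hF : F =O[cofinite] fun z => expTotal z.1 * expTotal z.2) (r s : ℝ) (lam : Fin d → ℝ) :
    Summable fun z : (Fin d → ℕ) × (Fin d → ℕ) =>
      poissonPMF d r lam z.1 * (poissonPMF d s lam z.2 * F z) := by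
  have hprod := hasSum_prod_mul_prod (summable_poissonPMF_mul_exp_sum r lam).hasSum
    (summable_poissonPMF_mul_exp_sum s lam).hasSum
  refine summable_of_isBigO hprod.summable ?_
  refine (((isBigO_refl (fun z : (Fin d → ℕ) × (Fin d → ℕ) =>
    poissonPMF d r lam z.1 * poissonPMF d s lam z.2) _).mul hF).congr' ?_ ?_) <;>
  · refine .of_forall fun z => ?_
    simp only [expTotal]
    ring

theorem summable_poissonPMF_mul_right
    (hF : F =O[cofinite] fun z => expTotal z.1 * expTotal z.2) (s : ℝ) (lam : Fin d → ℝ)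
    (x : Fin d → ℕ) : Summable fun y => poissonPMF d s lam y * F (x, y) :=
  summable_poissonPMF_mul ((hF.comp_tendsto (Prod.mk_right_injective x).tendsto_cofinite).trans
    (isBigO_const_mul_self (expTotal x) _ _)) s lam

theorem summable_poissonPMF_mul_tsum
    (hF : F =O[cofinite] fun z => expTotal z.1 * expTotal z.2) (r s : ℝ) (lam : Fin d → ℝ) :
    Summable fun x => poissonPMF d r lam x * ∑' y, poissonPMF d s lam y * F (x, y) := by
  simpa only [tsum_mul_left] using (summable_poissonPMF_mul_poissonPMF_mul hF r s lam).prod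

theorem klRisk_eq_sub_tsum {q q' : (Fin d → ℕ) → (Fin d → ℕ) → ℝ} (hs : 0 < s)
    (hlam : ∀ i, 0 < lam i) (hq : ∀ x y, 0 < q x y) (hq' : ∀ x y, 0 < q' x y)
    (hrisk : (fun z : (Fin d → ℕ) × (Fin d → ℕ) => log (poissonPMF d s lam z.2 / q z.1 z.2))
      =O[cofinite] fun z => expTotal z.1 * expTotal z.2)
    (hratio : (fun z : (Fin d → ℕ) × (Fin d → ℕ) => log (q' z.1 z.2 / q z.1 z.2))
      =O[cofinite] fun z => expTotal z.1 * expTotal z.2) :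
    klRisk d r s lam q' = klRisk d r s lam q
      - ∑' x, poissonPMF d r lam x * ∑' y, poissonPMF d s lam y * log (q' x y / q x y) := by
  have hlog (x y : Fin d → ℕ) : log (poissonPMF d s lam y / q' x y)
      = log (poissonPMF d s lam y / q x y) - log (q' x y / q x y) := by
    have hp := (poissonPMF_pos hs hlam y).ne'
    rw [log_div hp (hq' x y).ne', log_div hp (hq x y).ne', log_div (hq' x y).ne' (hq x y).ne']
    ring
  have hinner (x : Fin d → ℕ) : ∑' y, poissonPMF d s lam y * log (poissonPMF d s lam y / q' x y)
      = ∑' y, poissonPMF d s lam y * log (poissonPMF d s lam y / q x y)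
        - ∑' y, poissonPMF d s lam y * log (q' x y / q x y) := by
    simp only [hlog, mul_sub]
    exact (summable_poissonPMF_mul_right hrisk s lam x).tsum_sub
      (summable_poissonPMF_mul_right hratio s lam x)
  simp only [klRisk, hinner, mul_sub]
  exact (summable_poissonPMF_mul_tsum hrisk r s lam).tsum_sub
    (summable_poissonPMF_mul_tsum hratio r s lam)

end Growth

section GammaPredictive

open Real Asymptotics Filter

variable {d : ℕ} {r s α : ℝ} {lam : Fin d → ℝ}

/-- The factor of a Poisson-gamma predictive pmf with shape `1 / 2` that does not involve the
sampling rates. -/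
noncomputable def gammaWeight (x y : Fin d → ℕ) : ℝ :=
  ∏ i, Gamma ((x i : ℝ) + (y i : ℝ) + 1 / 2)
    / (Gamma ((x i : ℝ) + 1 / 2) * (Nat.factorial (y i) : ℝ))

/-- The Bayesian predictive pmf for the prior density `∏ i, (lam i) ^ (-1 / 2) * exp (-α * lam i)`.
The Jeffreys prior is the case `α = 0`; letting `α` depend on `x` gives an empirical Bayes rule. -/
noncomputable def gammaPredictive (r s α : ℝ) (x y : Fin d → ℕ) : ℝ :=
  ((r + α) / (r + s + α)) ^ ((∑ i, (x i : ℝ)) + (d : ℝ) / 2) * (s / (r + s + α)) ^ (∑ i, y i)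
    * gammaWeight x y

theorem Gamma_natCast_add_half_pos (n : ℕ) : 0 < Gamma ((n : ℝ) + 1 / 2) :=
  Gamma_pos_of_pos (by positivity)

theorem Gamma_natCast_add_natCast_add_half_pos (m n : ℕ) : 0 < Gamma ((m : ℝ) + n + 1 / 2) :=
  Gamma_pos_of_pos (by positivity)

theorem gammaWeight_pos (x y : Fin d → ℕ) : 0 < gammaWeight x y :=
  Finset.prod_pos fun i _ => div_pos (Gamma_natCast_add_natCast_add_half_pos _ _)
    (mul_pos (Gamma_natCast_add_half_pos _) (by positivity))

theorem gammaPredictive_pos (hr : 0 < r) (hs : 0 < s) (hα : 0 ≤ α) (x y : Fin d → ℕ) :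
    0 < gammaPredictive r s α x y := by
  have := gammaWeight_pos x y
  unfold gammaPredictive
  positivity

theorem log_gammaPredictive (hr : 0 < r) (hs : 0 < s) (hα : 0 ≤ α) (x y : Fin d → ℕ) :
    log (gammaPredictive r s α x y)
      = (∑ i, (x i : ℝ) + d / 2) * log ((r + α) / (r + s + α))
        + (∑ i, (y i : ℝ)) * log (s / (r + s + α)) + log (gammaWeight x y) := by
  rw [gammaPredictive, log_mul (by positivity) (gammaWeight_pos x y).ne',
    log_mul (by positivity) (by positivity), log_rpow (by positivity), log_pow, Nat.cast_sum]

/-- The `x`-part of `log (gammaPredictive r s α x y / gammaPredictive r s 0 x y)`, as a function of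
the total count `n` of `x`. -/
noncomputable def logGain (d : ℕ) (r s α n : ℝ) : ℝ :=
  (n + d / 2) * (log (1 + α / r) - log (1 + α / (r + s)))

theorem log_gammaPredictive_div_gammaPredictive_zero (hr : 0 < r) (hs : 0 < s) (hα : 0 ≤ α)
    (x y : Fin d → ℕ) :
    log (gammaPredictive r s α x y / gammaPredictive r s 0 x y)
      = logGain d r s α (∑ i, (x i : ℝ)) - (∑ i, (y i : ℝ)) * log (1 + α / (r + s)) := by
  have hone {t : ℝ} (ht : 0 < t) : log (1 + α / t) = log (t + α) - log t := by
    rw [← log_div (by positivity) ht.ne', add_div, div_self ht.ne']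
  rw [log_div (gammaPredictive_pos hr hs hα x y).ne' (gammaPredictive_pos hr hs le_rfl x y).ne',
    log_gammaPredictive hr hs hα, log_gammaPredictive hr hs le_rfl, logGain, hone hr,
    hone (add_pos hr hs), add_zero, add_zero, log_div (by positivity) (by positivity),
    log_div (by positivity) (by positivity), log_div (by positivity) (by positivity),
    log_div (by positivity) (by positivity)]
  ring

theorem log_poissonPMF_div_gammaWeight (hs : 0 < s) (hlam : ∀ i, 0 < lam i) (x y : Fin d → ℕ) :
    log (poissonPMF d s lam y / gammaWeight x y)
      = ∑ i, (-(s * lam i) + y i * log (s * lam i)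
          - (log (Gamma (x i + y i + 1 / 2)) - log (Gamma (x i + 1 / 2)))) := by
  have hterm (i : Fin d) : 0 < exp (-(s * lam i)) * (s * lam i) ^ y i / (Nat.factorial (y i) : ℝ) :=
    by have := hlam i; positivity
  have hweight (i : Fin d) : 0 < Gamma ((x i : ℝ) + (y i : ℝ) + 1 / 2)
      / (Gamma ((x i : ℝ) + 1 / 2) * (Nat.factorial (y i) : ℝ)) :=
    div_pos (Gamma_natCast_add_natCast_add_half_pos _ _)
      (mul_pos (Gamma_natCast_add_half_pos _) (by positivity))
  rw [poissonPMF, gammaWeight, ← Finset.prod_div_distrib,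
    log_prod fun i _ => (div_pos (hterm i) (hweight i)).ne']
  refine Finset.sum_congr rfl fun i _ => ?_
  have hlam := hlam i
  have hnum := Gamma_natCast_add_natCast_add_half_pos (x i) (y i)
  have hden := Gamma_natCast_add_half_pos (x i)
  rw [log_div (hterm i).ne' (hweight i).ne', log_div (by positivity) (by positivity),
    log_mul (by positivity) (by positivity), log_exp, log_pow, log_div hnum.ne' (by positivity),
    log_mul hden.ne' (by positivity)]
  ring

theorem log_Gamma_sub_log_Gamma_isBigO (i : Fin d) :
    (fun z : (Fin d → ℕ) × (Fin d → ℕ) =>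
        log (Gamma (z.1 i + z.2 i + 1 / 2)) - log (Gamma (z.1 i + 1 / 2)))
      =O[⊤] fun z => expTotal z.1 * expTotal z.2 := by
  have hmul := mul_isBigO_expTotal_mul_expTotal (pow_apply_isBigO_expTotal i 1)
    (pow_apply_isBigO_expTotal i 1)
  have hlin := snd_isBigO_expTotal_mul_expTotal
    ((pow_apply_isBigO_expTotal i 1).const_mul_left (1 / 2))
  have hsq := snd_isBigO_expTotal_mul_expTotal (pow_apply_isBigO_expTotal i 2)
  refine .trans (.of_norm_le fun z => ?_) ((hmul.add hlin).add hsq)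
  calc |log (Gamma (z.1 i + z.2 i + 1 / 2)) - log (Gamma (z.1 i + 1 / 2))|
      ≤ z.2 i * (z.1 i + 1 / 2 + z.2 i) := by
        rw [add_right_comm]
        exact abs_log_Gamma_add_natCast_sub_le (le_add_of_nonneg_left (by positivity)) (z.2 i)
    _ = (z.1 i) ^ 1 * (z.2 i) ^ 1 + 1 / 2 * (z.2 i) ^ 1 + (z.2 i) ^ 2 := by ring

theorem log_poissonPMF_div_gammaWeight_isBigO (hs : 0 < s) (hlam : ∀ i, 0 < lam i) :
    (fun z : (Fin d → ℕ) × (Fin d → ℕ) => log (poissonPMF d s lam z.2 / gammaWeight z.1 z.2))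
      =O[⊤] fun z => expTotal z.1 * expTotal z.2 := by
  simp only [log_poissonPMF_div_gammaWeight hs hlam]
  have hlin (i : Fin d) : (fun y : Fin d → ℕ => -(s * lam i) + y i * log (s * lam i))
      =O[⊤] (expTotal : (Fin d → ℕ) → ℝ) := by
    refine ((isBigO_const_const _ one_ne_zero _).trans one_isBigO_expTotal).add ?_
    simpa only [pow_one, mul_comm] using
      (pow_apply_isBigO_expTotal i 1).const_mul_left (log (s * lam i))
  exact .fun_sum fun i _ =>
    (snd_isBigO_expTotal_mul_expTotal (hlin i)).sub (log_Gamma_sub_log_Gamma_isBigO i)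

theorem sum_add_const_isBigO_expTotal (a : ℝ) :
    (fun x : Fin d → ℕ => ∑ i, (x i : ℝ) + a) =O[⊤] (expTotal : (Fin d → ℕ) → ℝ) :=
  sum_isBigO_expTotal.add ((isBigO_const_const _ one_ne_zero _).trans one_isBigO_expTotal)

theorem log_poissonPMF_div_gammaPredictive_isBigO (hr : 0 < r) (hs : 0 < s) (hα : 0 ≤ α)
    (hlam : ∀ i, 0 < lam i) :
    (fun z : (Fin d → ℕ) × (Fin d → ℕ) =>
        log (poissonPMF d s lam z.2 / gammaPredictive r s α z.1 z.2))
      =O[⊤] fun z => expTotal z.1 * expTotal z.2 := by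
  have hlog (x y : Fin d → ℕ) : log (poissonPMF d s lam y / gammaPredictive r s α x y)
      = log (poissonPMF d s lam y / gammaWeight x y)
        - log ((r + α) / (r + s + α)) * (∑ i, (x i : ℝ) + d / 2)
        - log (s / (r + s + α)) * ∑ i, (y i : ℝ) := by
    have hp := (poissonPMF_pos hs hlam y).ne'
    rw [log_div hp (gammaPredictive_pos hr hs hα x y).ne', log_div hp (gammaWeight_pos x y).ne',
      log_gammaPredictive hr hs hα]
    ring
  simp only [hlog]
  exact ((log_poissonPMF_div_gammaWeight_isBigO hs hlam).sub
    (fst_isBigO_expTotal_mul_expTotal ((sum_add_const_isBigO_expTotal _).const_mul_left _))).sub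
    (snd_isBigO_expTotal_mul_expTotal (sum_isBigO_expTotal.const_mul_left _))

section Bounded

variable {K : ℝ} {α : (Fin d → ℕ) → ℝ}

theorem log_one_add_div_isBigO_one {t : ℝ} (ht : 0 < t) (hα : ∀ x, α x ∈ Set.Icc 0 K) :
    (fun x => log (1 + α x / t)) =O[⊤] (1 : (Fin d → ℕ) → ℝ) :=
  .of_bound (K / t) <| .of_forall fun x => by
    rw [Pi.one_apply, norm_one, mul_one]
    exact (abs_log_one_add_le (div_nonneg (hα x).1 ht.le)).trans
      (div_le_div_of_nonneg_right (hα x).2 ht.le)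

theorem logGain_isBigO_expTotal (hr : 0 < r) (hs : 0 < s) (hα : ∀ x, α x ∈ Set.Icc 0 K) :
    (fun x => logGain d r s (α x) (∑ i, (x i : ℝ))) =O[⊤] (expTotal : (Fin d → ℕ) → ℝ) := by
  simpa only [logGain, Pi.one_apply, mul_one] using (sum_add_const_isBigO_expTotal (d / 2)).mul
    ((log_one_add_div_isBigO_one hr hα).sub (log_one_add_div_isBigO_one (add_pos hr hs) hα))

theorem klRisk_gammaPredictive (hr : 0 < r) (hs : 0 < s) (hlam : ∀ i, 0 < lam i)
    (hα : ∀ x, α x ∈ Set.Icc 0 K) :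
    klRisk d r s lam (fun x => gammaPredictive r s (α x) x)
      = klRisk d r s lam (gammaPredictive r s 0)
        - ∑' x, poissonPMF d r lam x * (logGain d r s (α x) (∑ i, (x i : ℝ))
            - (∑ i, s * lam i) * log (1 + α x / (r + s))) := by
  have hratio (x y : Fin d → ℕ) :=
    log_gammaPredictive_div_gammaPredictive_zero hr hs (hα x).1 x y
  have hgrowth : (fun z : (Fin d → ℕ) × (Fin d → ℕ) =>
      log (gammaPredictive r s (α z.1) z.1 z.2 / gammaPredictive r s 0 z.1 z.2))
      =O[cofinite] fun z => expTotal z.1 * expTotal z.2 := by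
    simp only [hratio, mul_comm (∑ _, _) (log _)]
    exact ((fst_isBigO_expTotal_mul_expTotal (logGain_isBigO_expTotal hr hs hα)).sub
      (mul_isBigO_expTotal_mul_expTotal
        ((log_one_add_div_isBigO_one (add_pos hr hs) hα).trans one_isBigO_expTotal)
        sum_isBigO_expTotal)).mono le_top
  rw [klRisk_eq_sub_tsum hs hlam (gammaPredictive_pos hr hs le_rfl)
    (fun x => gammaPredictive_pos hr hs (hα x).1 x)
    ((log_poissonPMF_div_gammaPredictive_isBigO hr hs le_rfl hlam).mono le_top) hgrowth]
  have hmean (x : Fin d → ℕ) := ((hasSum_poissonPMF s lam).mul_right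
    (logGain d r s (α x) (∑ i, (x i : ℝ)))).sub ((hasSum_poissonPMF_mul_sum s lam).mul_right
      (log (1 + α x / (r + s))))
  congr! 4 with x
  rw [← one_mul (logGain _ _ _ _ _), ← (hmean x).tsum_eq]
  refine tsum_congr fun y => ?_
  rw [hratio]
  ring

end Bounded

theorem hasSum_poissonPMF_mul_logGain_sub {a : ℝ → ℝ} {K : ℝ} (hr : 0 < r) (hs : 0 < s)
    (ha : ∀ n : ℕ, a n ∈ Set.Icc 0 K) (lam : Fin d → ℝ) :
    HasSum (fun x => poissonPMF d r lam x * (logGain d r s (a (∑ i, (x i : ℝ))) (∑ i, (x i : ℝ))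
        - s / r * ((∑ i, (x i : ℝ)) * log (1 + a (∑ i, (x i : ℝ) - 1) / (r + s)))))
      (∑' x, poissonPMF d r lam x * (logGain d r s (a (∑ i, (x i : ℝ))) (∑ i, (x i : ℝ))
        - (∑ i, s * lam i) * log (1 + a (∑ i, (x i : ℝ)) / (r + s)))) := by
  have hα (x : Fin d → ℕ) : a (∑ i, (x i : ℝ)) ∈ Set.Icc 0 K := by exact_mod_cast ha (∑ i, x i)
  have hgain := (summable_poissonPMF_mul ((logGain_isBigO_expTotal hr hs hα).mono le_top)
    r lam).hasSum
  have hlog := (summable_poissonPMF_mul (((log_one_add_div_isBigO_one (add_pos hr hs) hα).trans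
    one_isBigO_expTotal).mono le_top) r lam).hasSum
  have hstein := hasSum_poissonPMF_mul_sum_mul (g := fun n => log (1 + a (n - 1) / (r + s)))
    (by simpa only [add_sub_cancel_right] using hlog)
  have hmean : ∑ i, s * lam i = s / r * ∑ i, r * lam i := by
    rw [← Finset.mul_sum, ← Finset.mul_sum]
    field_simp
  convert! hgain.sub (hstein.mul_left (s / r)) using 1
  · ext x
    ring
  · rw [← mul_assoc, ← hmean, ← (hgain.sub (hlog.mul_left _)).tsum_eq]
    congr! 2 with x
    ring

theorem klRisk_gammaPredictive_lt {a : ℝ → ℝ} {K : ℝ} (hr : 0 < r) (hs : 0 < s)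
    (hlam : ∀ i, 0 < lam i) (ha : ∀ n : ℕ, a n ∈ Set.Icc 0 K)
    (hgain : ∀ n : ℕ, s / r * (n * log (1 + a (n - 1) / (r + s))) < logGain d r s (a n) n) :
    klRisk d r s lam (fun x => gammaPredictive r s (a (∑ i, (x i : ℝ))) x)
      < klRisk d r s lam (gammaPredictive r s 0) := by
  rw [klRisk_gammaPredictive hr hs hlam fun x => by exact_mod_cast ha (∑ i, x i),
    sub_lt_self_iff]
  have hsum := hasSum_poissonPMF_mul_logGain_sub hr hs ha lam
  have hpos (x : Fin d → ℕ) : 0 < poissonPMF d r lam x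
      * (logGain d r s (a (∑ i, (x i : ℝ))) (∑ i, (x i : ℝ))
        - s / r * ((∑ i, (x i : ℝ)) * log (1 + a (∑ i, (x i : ℝ) - 1) / (r + s)))) :=
    mul_pos (poissonPMF_pos hr hlam x) (sub_pos.2 (by exact_mod_cast hgain (∑ i, x i)))
  exact hsum.tsum_eq ▸ hsum.summable.tsum_pos (fun x => (hpos x).le) 0 (hpos 0)

theorem pJ_eq_gammaPredictive (d : ℕ) (r s : ℝ) : pJ d r s = gammaPredictive r s 0 := by
  ext x y
  simp only [pJ, gammaPredictive, gammaWeight, add_zero]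

theorem pHat_eq_gammaPredictive (d : ℕ) (r s b : ℝ) :
    pHat d r s b = fun x => gammaPredictive r s (r * b / (∑ i, (x i : ℝ) + 1)) x :=
  rfl

end GammaPredictive

theorem stmt_4 (d : ℕ) (hd : 3 ≤ d) (r s b : ℝ) (hr : 0 < r) (hs : 0 < s)
    (hb0 : 0 < b) (hb : b ≤ (d : ℝ) - 2)
    (lam : Fin d → ℝ) (hlam : ∀ i, 0 < lam i) :
    klRisk d r s lam (fun x y => pHat d r s b x y)
      < klRisk d r s lam (fun x y => pJ d r s x y) := by
  rw [pHat_eq_gammaPredictive, pJ_eq_gammaPredictive]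
  refine klRisk_gammaPredictive_lt (a := fun n => r * b / (n + 1)) (K := r * b) hr hs hlam
    (fun n => ⟨by positivity, div_le_self (by positivity) (by simp)⟩) fun n => ?_
  have hβb : r * b / (r + s) < b := by
    rw [div_lt_iff₀ (by positivity)]
    nlinarith [mul_pos hs hb0]
  have hbound := sub_div_mul_log_lt_mul_log_sub_log (D := n + d / 2) n.cast_nonneg
    (by positivity : 0 < r * b / (r + s)) hβb (by linarith)
  have hodds : (b - r * b / (r + s)) / (r * b / (r + s)) = s / r := by
    field_simp
    ring
  rw [hodds] at hbound
  convert hbound using 1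
  · rw [sub_add_cancel, div_right_comm]
  · rw [logGain, div_right_comm, mul_div_cancel_left₀ b hr.ne', div_right_comm]
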